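/- In a finite MDP with n states, d0 is boundedly strongly synchronizing in T (i.e., some strategy σ satisfies liminf_{i→∞} M^σ_i(T) > 0) if and only if M^{σ_u}_i(E ∩ T) > 0 for all i ≥ 2^n, where σ_u is the uniform strategy and E is the union of all end-components. -/

import Mathlib

open scoped BigOperators
open Classical Filter

/-- A finite Markov decision process with real transition probabilities. -/
structure MDP (Q A : Type) [Fintype Q] [Fintype A] where
  δ : Q → A → Q → ℝ
  δ_nonneg : ∀ q a q', 0 ≤ δ q a q'
  δ_sum : ∀ q a, ∑ q', δ q a q' = 1

namespace MDP

variable {Q A : Type} [Fintype Q] [Fintype A]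

/-- `d` is a probability distribution. -/
def IsDist (d : Q → ℝ) : Prop := (∀ q, 0 ≤ d q) ∧ ∑ q, d q = 1

/-- A (randomized, history-dependent) strategy maps a history (list of past
state-action pairs) and the current state to a distribution over actions. -/
def IsStrategy (σ : List (Q × A) → Q → A → ℝ) : Prop :=
  (∀ h q a, 0 ≤ σ h q a) ∧ ∀ h q, ∑ a, σ h q a = 1

/-- The probability of the finite path `qs` (with actions `as`) of length `i`,
under strategy `σ` from initial distribution `d0`. -/
noncomputable def pathProb (M : MDP Q A) (σ : List (Q × A) → Q → A → ℝ)
    (d0 : Q → ℝ) (i : ℕ) (qs : Fin (i + 1) → Q) (as : Fin i → A) : ℝ :=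
  d0 (qs 0) * ∏ j : Fin i,
    (σ (List.ofFn (fun k : Fin j.val =>
          (qs ⟨k.val, by have := k.isLt; have := j.isLt; omega⟩,
           as ⟨k.val, by have := k.isLt; have := j.isLt; omega⟩)))
        (qs j.castSucc) (as j))
      * M.δ (qs j.castSucc) (as j) (qs j.succ)

/-- The distribution over states after `i` steps (`M^σ_i`). -/
noncomputable def stepDist (M : MDP Q A) (σ : List (Q × A) → Q → A → ℝ)
    (d0 : Q → ℝ) (i : ℕ) (q : Q) : ℝ :=
  ∑ qs : Fin (i + 1) → Q, ∑ as : Fin i → A,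
    if qs (Fin.last i) = q then M.pathProb σ d0 i qs as else 0

/-- The probability mass that a (sub)distribution assigns to a set `T`. -/
noncomputable def mass (d : Q → ℝ) (T : Set Q) : ℝ := ∑ q, T.indicator d q

/-- The support of a (sub)distribution. -/
def supp {α : Type} (d : α → ℝ) : Set α := {q | 0 < d q}

/-- One-step sure predecessors of `Y`. -/
def Pre (M : MDP Q A) (Y : Set Q) : Set Q :=
  {q | ∃ a, ∀ q', 0 < M.δ q a q' → q' ∈ Y}

/-- Probability of reaching `T` within `i` steps. -/
noncomputable def reachProb (M : MDP Q A) (σ : List (Q × A) → Q → A → ℝ)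
    (d0 : Q → ℝ) (T : Set Q) (i : ℕ) : ℝ :=
  ∑ qs : Fin (i + 1) → Q, ∑ as : Fin i → A,
    if ∃ j, qs j ∈ T then M.pathProb σ d0 i qs as else 0

/-- `d0` is almost-sure winning for the reachability objective `◇T`:
some strategy reaches `T` with probability one. -/
def ASReach (M : MDP Q A) (d0 : Q → ℝ) (T : Set Q) : Prop :=
  ∃ σ, IsStrategy σ ∧ (⨆ i : ℕ, M.reachProb σ d0 T i) = 1

/-- `d0` is limit-sure eventually synchronizing in `T`. -/
def LimitSureEventually (M : MDP Q A) (d0 : Q → ℝ) (T : Set Q) : Prop :=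
  ∀ ε > (0 : ℝ), ∃ σ, IsStrategy σ ∧ ∃ i, 1 - ε ≤ mass (M.stepDist σ d0 i) T

/-- `d0` is almost-sure weakly synchronizing in `T`. -/
def ASWeakly (M : MDP Q A) (d0 : Q → ℝ) (T : Set Q) : Prop :=
  ∃ σ, IsStrategy σ ∧ ∀ ε > (0 : ℝ), {i : ℕ | 1 - ε ≤ mass (M.stepDist σ d0 i) T}.Infinite

/-- `d0` is almost-sure strongly synchronizing in `T`. -/
def ASStrongly (M : MDP Q A) (d0 : Q → ℝ) (T : Set Q) : Prop :=
  ∃ σ, IsStrategy σ ∧ ∀ ε > (0 : ℝ), ∃ N, ∀ i ≥ N, 1 - ε ≤ mass (M.stepDist σ d0 i) T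

/-- The uniform distribution on a set `S`. -/
noncomputable def uniformOn (S : Set Q) : Q → ℝ :=
  fun q => if q ∈ S then 1 / (S.ncard : ℝ) else 0

/-- The uniform strategy, playing all actions uniformly at random. -/
noncomputable def uniformStrategy (Q A : Type) [Fintype A] :
    List (Q × A) → Q → A → ℝ :=
  fun _ _ _ => 1 / (Fintype.card A : ℝ)

/-- Action `a` is allowed in `q` w.r.t. `S` if all its successors stay in `S`. -/
def Allowed (M : MDP Q A) (S : Set Q) (q : Q) (a : A) : Prop :=
  ∀ q', 0 < M.δ q a q' → q' ∈ S

/-- Edge relation within `S` given the allowed actions. -/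
def ECEdge (M : MDP Q A) (S : Set Q) (q q' : Q) : Prop :=
  q ∈ S ∧ q' ∈ S ∧ ∃ a, M.Allowed S q a ∧ 0 < M.δ q a q'

/-- `S` is an end-component: closed and strongly connected via allowed actions. -/
def IsEC (M : MDP Q A) (S : Set Q) : Prop :=
  (∀ q ∈ S, ∃ a, M.Allowed S q a) ∧
  ∀ q ∈ S, ∀ q' ∈ S, Relation.ReflTransGen (M.ECEdge S) q q'

/-- The union of all end-components. -/
def ECUnion (M : MDP Q A) : Set Q := ⋃₀ {S | M.IsEC S}

/-- Positive always synchronizing in `T`. -/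
def PosAlways (M : MDP Q A) (d0 : Q → ℝ) (T : Set Q) : Prop :=
  ∃ σ, IsStrategy σ ∧ ∀ i, 0 < mass (M.stepDist σ d0 i) T

/-- Positive eventually synchronizing in `T`. -/
def PosEvent (M : MDP Q A) (d0 : Q → ℝ) (T : Set Q) : Prop :=
  ∃ σ, IsStrategy σ ∧ ∃ i, 0 < mass (M.stepDist σ d0 i) T

/-- Positive weakly synchronizing in `T`. -/
def PosWeakly (M : MDP Q A) (d0 : Q → ℝ) (T : Set Q) : Prop :=
  ∃ σ, IsStrategy σ ∧ ∀ N, ∃ i ≥ N, 0 < mass (M.stepDist σ d0 i) T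

/-- Positive strongly synchronizing in `T`. -/
def PosStrongly (M : MDP Q A) (d0 : Q → ℝ) (T : Set Q) : Prop :=
  ∃ σ, IsStrategy σ ∧ ∃ N, ∀ i ≥ N, 0 < mass (M.stepDist σ d0 i) T

/-- Bounded always synchronizing in `T`. -/
def BndAlways (M : MDP Q A) (d0 : Q → ℝ) (T : Set Q) : Prop :=
  ∃ σ, IsStrategy σ ∧ ∃ ε > (0 : ℝ), ∀ i, ε < mass (M.stepDist σ d0 i) T

/-- Bounded eventually synchronizing in `T`. -/
def BndEvent (M : MDP Q A) (d0 : Q → ℝ) (T : Set Q) : Prop :=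
  ∃ σ, IsStrategy σ ∧ ∃ ε > (0 : ℝ), ∃ i, ε < mass (M.stepDist σ d0 i) T

/-- Bounded weakly synchronizing in `T`. -/
def BndWeakly (M : MDP Q A) (d0 : Q → ℝ) (T : Set Q) : Prop :=
  ∃ σ, IsStrategy σ ∧ ∃ ε > (0 : ℝ), ∀ N, ∃ i ≥ N, ε < mass (M.stepDist σ d0 i) T

/-- Bounded strongly synchronizing in `T`. -/
def BndStrongly (M : MDP Q A) (d0 : Q → ℝ) (T : Set Q) : Prop :=
  ∃ σ, IsStrategy σ ∧ ∃ ε > (0 : ℝ), ∃ N, ∀ i ≥ N, ε < mass (M.stepDist σ d0 i) T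

end MDP

namespace MDP

variable {Q A : Type} [Fintype Q] [Fintype A]

/-- Pigeonhole: an orbit in a finite type is eventually periodic. -/
theorem aux_per {α : Type} [Fintype α] (F : α → α) (s : ℕ → α)
    (hs : ∀ i, s (i + 1) = F (s i)) :
    ∃ j d, 0 < d ∧ j + d ≤ Fintype.card α ∧ ∀ i ≥ j, ∀ k, s (i + k * d) = s i := by
  have hni : ¬ Function.Injective (fun i : Fin (Fintype.card α + 1) => s i) := by
    intro h
    have := Fintype.card_le_of_injective _ h
    simp at this
  obtain ⟨j, k, hlt, he⟩ : ∃ j k : ℕ, j < k ∧ k ≤ Fintype.card α ∧ s j = s k := by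
    rw [Function.Injective] at hni
    push Not at hni
    obtain ⟨a, b, h1, h2⟩ := hni
    rcases lt_trichotomy a b with h | h | h
    · exact ⟨a, b, h, by omega, h1⟩
    · exact absurd h h2
    · exact ⟨b, a, h, by omega, h1.symm⟩
  obtain ⟨hk, he⟩ := he
  refine ⟨j, k - j, by omega, by omega, ?_⟩
  have h1 : ∀ i ≥ j, s (i + (k - j)) = s i := by
    intro i hi
    induction i, hi using Nat.le_induction with
    | base => rw [he]; congr 1; omega
    | succ i hi ih =>
      rw [show i + 1 + (k - j) = (i + (k - j)) + 1 by omega, hs, hs, ih]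
  intro i hi m
  induction m with
  | zero => simp
  | succ m ih =>
    rw [show i + (m + 1) * (k - j) = (i + m * (k - j)) + (k - j) by ring, h1 _ (by omega), ih]

/-- State-action occupation at time `i`. -/
noncomputable def occ (M : MDP Q A) (σ : List (Q × A) → Q → A → ℝ)
    (d0 : Q → ℝ) (i : ℕ) (q : Q) (a : A) : ℝ :=
  ∑ qs : Fin (i + 1) → Q, ∑ as : Fin i → A,
    if qs (Fin.last i) = q then M.pathProb σ d0 i qs as *
      σ (List.ofFn (fun k : Fin i => (qs k.castSucc, as k))) q a else 0

theorem pathProb_nonneg (M : MDP Q A) {σ : List (Q × A) → Q → A → ℝ} (hσ : IsStrategy σ)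
    {d0 : Q → ℝ} (hd0 : IsDist d0) (i : ℕ) (qs : Fin (i + 1) → Q) (as : Fin i → A) :
    0 ≤ M.pathProb σ d0 i qs as :=
  mul_nonneg (hd0.1 _) (Finset.prod_nonneg fun _ _ => mul_nonneg (hσ.1 _ _ _) (M.δ_nonneg _ _ _))

theorem occ_nonneg (M : MDP Q A) {σ : List (Q × A) → Q → A → ℝ} (hσ : IsStrategy σ)
    {d0 : Q → ℝ} (hd0 : IsDist d0) (i : ℕ) (q : Q) (a : A) : 0 ≤ M.occ σ d0 i q a := by
  unfold occ
  refine Finset.sum_nonneg fun qs _ => Finset.sum_nonneg fun as _ => ?_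
  split_ifs
  · exact mul_nonneg (M.pathProb_nonneg hσ hd0 i qs as) (hσ.1 _ _ _)
  · exact le_rfl

theorem sum_occ (M : MDP Q A) {σ : List (Q × A) → Q → A → ℝ} (hσ : IsStrategy σ)
    (d0 : Q → ℝ) (i : ℕ) (q : Q) : ∑ a, M.occ σ d0 i q a = M.stepDist σ d0 i q := by
  unfold occ stepDist
  rw [Finset.sum_comm]
  refine Finset.sum_congr rfl fun qs _ => ?_
  rw [Finset.sum_comm]
  refine Finset.sum_congr rfl fun as _ => ?_
  split_ifs
  · rw [← Finset.mul_sum, hσ.2, mul_one]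
  · simp

theorem stepDist_zero (M : MDP Q A) (σ : List (Q × A) → Q → A → ℝ)
    (d0 : Q → ℝ) (q : Q) : M.stepDist σ d0 0 q = d0 q := by
  unfold stepDist pathProb
  rw [← (Equiv.funUnique (Fin 1) Q).symm.sum_comp]
  simp

theorem pathProb_snoc (M : MDP Q A) (σ : List (Q × A) → Q → A → ℝ)
    (d0 : Q → ℝ) (i : ℕ) (qs : Fin (i + 1) → Q) (as : Fin i → A) (q' : Q) (a : A) :
    M.pathProb σ d0 (i + 1) (Fin.snoc (α := fun _ => Q) qs q') (Fin.snoc (α := fun _ => A) as a) =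
      M.pathProb σ d0 i qs as *
      σ (List.ofFn (fun k : Fin i => (qs k.castSucc, as k))) (qs (Fin.last i)) a *
      M.δ (qs (Fin.last i)) a q' := by
  have hq : ∀ (k : ℕ) (h : k < i + 1 + 1) (h' : k < i + 1),
      Fin.snoc (α := fun _ => Q) qs q' ⟨k, h⟩ = qs ⟨k, h'⟩ := by
    intro k h h'
    exact Fin.snoc_castSucc (α := fun _ => Q) q' qs ⟨k, h'⟩
  have ha : ∀ (k : ℕ) (h : k < i + 1) (h' : k < i),
      Fin.snoc (α := fun _ => A) as a ⟨k, h⟩ = as ⟨k, h'⟩ := by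
    intro k h h'
    exact Fin.snoc_castSucc (α := fun _ => A) a as ⟨k, h'⟩
  have h0 : Fin.snoc (α := fun _ => Q) qs q' 0 = qs 0 := hq 0 (by omega) (by omega)
  unfold pathProb
  rw [Fin.prod_univ_castSucc, h0, mul_assoc, mul_assoc]
  congr 1
  congr 1
  · refine Finset.prod_congr rfl fun j _ => ?_
    have e1 : Fin.snoc (α := fun _ => Q) qs q' j.castSucc.castSucc = qs j.castSucc :=
      Fin.snoc_castSucc (α := fun _ => Q) q' qs _
    have e2 : Fin.snoc (α := fun _ => A) as a j.castSucc = as j :=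
      Fin.snoc_castSucc (α := fun _ => A) a as _
    have e3 : Fin.snoc (α := fun _ => Q) qs q' j.castSucc.succ = qs j.succ :=
      hq (j.val + 1) (by omega) (by omega)
    rw [e1, e2, e3]
    congr 2
    congr 1
    funext k
    have := k.isLt
    have := j.isLt
    have hk : k.val < i := by
      have h1 := k.isLt
      simp only [Fin.val_castSucc] at h1
      omega
    rw [hq k.val (by omega) (by omega), ha k.val (by omega) hk]
  · have e1 : Fin.snoc (α := fun _ => Q) qs q' (Fin.last i).castSucc = qs (Fin.last i) :=
      Fin.snoc_castSucc (α := fun _ => Q) q' qs _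
    have e2 : Fin.snoc (α := fun _ => A) as a (Fin.last i) = a :=
      Fin.snoc_last (α := fun _ => A) a as
    have e3 : Fin.snoc (α := fun _ => Q) qs q' (Fin.last i).succ = q' :=
      Fin.snoc_last (α := fun _ => Q) q' qs
    rw [e1, e2, e3]
    congr 2
    congr 1
    funext k
    have hk : k.val < i := k.isLt
    rw [hq k.val (by omega) (by omega), ha k.val (by omega) hk]
    rfl

theorem stepDist_succ (M : MDP Q A) (σ : List (Q × A) → Q → A → ℝ)
    (d0 : Q → ℝ) (i : ℕ) (q' : Q) :
    M.stepDist σ d0 (i + 1) q' = ∑ q, ∑ a, M.occ σ d0 i q a * M.δ q a q' := by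
  have hL : M.stepDist σ d0 (i + 1) q' = ∑ qs : Fin (i + 1) → Q, ∑ as : Fin i → A, ∑ a,
      M.pathProb σ d0 i qs as *
      σ (List.ofFn (fun k : Fin i => (qs k.castSucc, as k))) (qs (Fin.last i)) a *
      M.δ (qs (Fin.last i)) a q' := by
    unfold stepDist
    rw [← (Fin.snocEquiv (fun _ : Fin (i + 1 + 1) => Q)).sum_comp, Fintype.sum_prod_type, Finset.sum_comm]
    refine Finset.sum_congr rfl fun qs _ => ?_
    rw [Finset.sum_eq_single q']
    · rw [← (Fin.snocEquiv (fun _ : Fin (i + 1) => A)).sum_comp, Fintype.sum_prod_type, Finset.sum_comm]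
      refine Finset.sum_congr rfl fun as _ => Finset.sum_congr rfl fun a _ => ?_
      simp only [Fin.snocEquiv_apply]
      rw [if_pos (by simp)]
      exact M.pathProb_snoc σ d0 i qs as q' a
    · intro b _ hb
      simp [Fin.snocEquiv_apply, hb]
    · simp
  rw [hL]
  unfold occ
  simp only [Finset.sum_mul]
  have : ∀ q : Q, (∑ a, ∑ qs : Fin (i + 1) → Q, ∑ as : Fin i → A,
      (if qs (Fin.last i) = q then M.pathProb σ d0 i qs as *
      σ (List.ofFn (fun k : Fin i => (qs k.castSucc, as k))) q a else 0) * M.δ q a q')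
      = ∑ qs : Fin (i + 1) → Q, ∑ as : Fin i → A, ∑ a,
      (if qs (Fin.last i) = q then M.pathProb σ d0 i qs as *
      σ (List.ofFn (fun k : Fin i => (qs k.castSucc, as k))) q a else 0) * M.δ q a q' := by
    intro q
    rw [Finset.sum_comm]
    refine Finset.sum_congr rfl fun qs _ => ?_
    rw [Finset.sum_comm]
  simp only [this]
  conv_rhs => rw [Finset.sum_comm]
  refine Finset.sum_congr rfl fun qs _ => ?_
  rw [Finset.sum_eq_single (qs (Fin.last i))]
  · simp
  · intro b _ hb
    simp [hb.symm]
  · simp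

theorem occ_markov (M : MDP Q A) (K : ℕ → Q → A → ℝ) (d0 : Q → ℝ) (i : ℕ) (q : Q) (a : A) :
    M.occ (fun h => K h.length) d0 i q a =
      M.stepDist (fun h => K h.length) d0 i q * K i q a := by
  unfold occ stepDist
  simp [Finset.sum_mul]

theorem stepDist_nonneg (M : MDP Q A) {σ : List (Q × A) → Q → A → ℝ} (hσ : IsStrategy σ)
    {d0 : Q → ℝ} (hd0 : IsDist d0) (i : ℕ) (q : Q) : 0 ≤ M.stepDist σ d0 i q := by
  rw [← M.sum_occ hσ]
  exact Finset.sum_nonneg fun a _ => M.occ_nonneg hσ hd0 i q a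

theorem stepDist_sum (M : MDP Q A) {σ : List (Q × A) → Q → A → ℝ} (hσ : IsStrategy σ)
    {d0 : Q → ℝ} (hd0 : IsDist d0) (i : ℕ) : ∑ q, M.stepDist σ d0 i q = 1 := by
  induction i with
  | zero => simp only [stepDist_zero]; exact hd0.2
  | succ i ih =>
    simp only [stepDist_succ]
    rw [Finset.sum_comm, ← ih]
    refine Finset.sum_congr rfl fun q _ => ?_
    rw [Finset.sum_comm, ← M.sum_occ hσ]
    refine Finset.sum_congr rfl fun a _ => ?_
    rw [← Finset.mul_sum, M.δ_sum, mul_one]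

theorem mass_nonneg {d : Q → ℝ} (hd : ∀ q, 0 ≤ d q) (T : Set Q) : 0 ≤ mass d T :=
  Finset.sum_nonneg fun q _ => Set.indicator_nonneg (fun x _ => hd x) q

theorem mass_le {d : Q → ℝ} (hd : ∀ q, 0 ≤ d q) (T : Set Q) : mass d T ≤ ∑ q, d q :=
  Finset.sum_le_sum fun q _ => Set.indicator_le_self' (fun x _ => hd x) q

theorem le_mass {d : Q → ℝ} (hd : ∀ q, 0 ≤ d q) {T : Set Q} {q : Q} (hq : q ∈ T) :
    d q ≤ mass d T := by
  have := Finset.single_le_sum (f := fun q => T.indicator d q)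
    (fun q _ => Set.indicator_nonneg (fun x _ => hd x) q) (Finset.mem_univ q)
  simpa [hq, mass] using this

theorem mass_pos_iff {d : Q → ℝ} (hd : ∀ q, 0 ≤ d q) {T : Set Q} :
    0 < mass d T ↔ ∃ q ∈ T, 0 < d q := by
  constructor
  · intro h
    by_contra! hc
    have : mass d T = 0 := by
      refine Finset.sum_eq_zero fun q _ => ?_
      by_cases hq : q ∈ T
      · simp [hq, le_antisymm (hc q hq) (hd q)]
      · simp [hq]
    linarith
  · rintro ⟨q, hq, h⟩
    exact h.trans_le (le_mass hd hq)

/-- The key transience lemma: states visited infinitely often in expectation lie in an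
end-component. -/
theorem summable_of_not_mem (M : MDP Q A) {σ : List (Q × A) → Q → A → ℝ} (hσ : IsStrategy σ)
    {d0 : Q → ℝ} (hd0 : IsDist d0) {q : Q} (hq : q ∉ M.ECUnion) :
    Summable (fun i => M.stepDist σ d0 i q) := by
  set x := M.occ σ d0 with hx
  have hx0 : ∀ i q a, 0 ≤ x i q a := M.occ_nonneg hσ hd0
  let I : Q → A → Prop := fun q a => ¬ Summable (fun i => x i q a)
  let G : Q → Q → Prop := fun q q' => ∃ a, I q a ∧ 0 < M.δ q a q'
  have hexists : ∀ q, ¬ Summable (fun i => M.stepDist σ d0 i q) → ∃ a, I q a := by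
    intro q h
    by_contra! hc
    apply h
    simp only [← M.sum_occ hσ]
    exact summable_sum fun a _ => not_not.mp (hc a)
  -- reversibility of edges
  have hrev : ∀ q q', G q q' → Relation.ReflTransGen G q' q := by
    rintro q q' ⟨a, ha, hδ⟩
    by_contra hnot
    apply ha
    let D : Set Q := {y | Relation.ReflTransGen G q' y}
    have hqD : q ∉ D := hnot
    let m : ℕ → ℝ := fun i => mass (M.stepDist σ d0 i) D
    let out : ℕ → ℝ := fun i => ∑ y, ∑ b, if y ∈ D ∧ ¬ I y b then x i y b else 0
    have hout : Summable out := by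
      refine summable_sum fun y _ => summable_sum fun b _ => ?_
      by_cases h : y ∈ D ∧ ¬ I y b
      · simp only [h, not_false_eq_true, and_self, if_true]
        exact not_not.mp h.2
      · simp only [h, if_false]
        exact summable_zero
    have hm0 : ∀ i, 0 ≤ m i := fun i => mass_nonneg (M.stepDist_nonneg hσ hd0 i) D
    have hm1 : ∀ i, m i ≤ 1 := fun i =>
      (mass_le (M.stepDist_nonneg hσ hd0 i) D).trans (M.stepDist_sum hσ hd0 i).le
    have hout0 : ∀ i, 0 ≤ out i := fun i => Finset.sum_nonneg fun y _ =>
      Finset.sum_nonneg fun b _ => by split_ifs; exacts [hx0 _ _ _, le_rfl]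
    -- mass sent into D
    let into : Q → A → ℝ := fun y b => mass (M.δ y b) D
    have hinto0 : ∀ y b, 0 ≤ into y b := fun y b => mass_nonneg (M.δ_nonneg y b) D
    have hm_succ : ∀ i, m (i + 1) = ∑ y, ∑ b, x i y b * into y b := by
      intro i
      simp only [m, mass, into, Finset.mul_sum]
      have : ∀ z, D.indicator (M.stepDist σ d0 (i + 1)) z =
          ∑ y, ∑ b, x i y b * D.indicator (M.δ y b) z := by
        intro z
        by_cases hz : z ∈ D
        · simp [hz, stepDist_succ, hx]
        · simp [hz]
      simp only [this]
      rw [Finset.sum_comm]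
      refine Finset.sum_congr rfl fun y _ => ?_
      rw [Finset.sum_comm]
    have hm_eq : ∀ i, m i = ∑ y, ∑ b, if y ∈ D then x i y b else 0 := by
      intro i
      simp only [m, mass]
      refine Finset.sum_congr rfl fun y _ => ?_
      by_cases hy : y ∈ D
      · simp [hy, ← M.sum_occ hσ, hx]
      · simp [hy]
    have hstep : ∀ i, x i q a * M.δ q a q' ≤ m (i + 1) - m i + out i := by
      intro i
      have : x i q a * M.δ q a q' + m i ≤ m (i + 1) + out i := by
        rw [hm_succ, hm_eq]
        have e : x i q a * M.δ q a q' =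
            ∑ y, ∑ b, if y = q ∧ b = a then x i q a * M.δ q a q' else 0 := by
          rw [Finset.sum_eq_single q, Finset.sum_eq_single a] <;> simp +contextual
        rw [e]
        simp only [out, ← Finset.sum_add_distrib]
        refine Finset.sum_le_sum fun y _ => Finset.sum_le_sum fun b _ => ?_
        by_cases hy : y ∈ D
        · have hyq : y ≠ q := fun h => hqD (h ▸ hy)
          by_cases hI : I y b
          · have : into y b = 1 := by
              simp only [into, mass]
              rw [← M.δ_sum y b]
              refine Finset.sum_congr rfl fun z _ => ?_
              by_cases hz : z ∈ D
              · simp [hz]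
              · rcases (M.δ_nonneg y b z).eq_or_lt with h | h
                · simp [hz, h]
                · exact absurd (Relation.ReflTransGen.tail hy ⟨b, hI, h⟩) hz
            simp [hy, hyq, hI, this]
          · simp [hy, hyq, hI, mul_nonneg (hx0 i y b) (hinto0 y b)]
        · by_cases hyb : y = q ∧ b = a
          · obtain ⟨rfl, rfl⟩ := hyb
            simp only [hy, and_self, if_true, if_false, false_and, add_zero]
            exact mul_le_mul_of_nonneg_left
              (le_mass (M.δ_nonneg y b) (show q' ∈ D from Relation.ReflTransGen.refl)) (hx0 _ _ _)
          · simp [hy, hyb, mul_nonneg (hx0 i y b) (hinto0 y b)]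
      linarith
    have hsum : Summable (fun i => x i q a * M.δ q a q') := by
      refine summable_of_sum_range_le (c := 1 + ∑' i, out i)
        (fun i => mul_nonneg (hx0 _ _ _) hδ.le) fun n => ?_
      calc ∑ i ∈ Finset.range n, x i q a * M.δ q a q'
          ≤ ∑ i ∈ Finset.range n, (m (i + 1) - m i + out i) :=
            Finset.sum_le_sum fun i _ => hstep i
        _ = (m n - m 0) + ∑ i ∈ Finset.range n, out i := by
            rw [Finset.sum_add_distrib, Finset.sum_range_sub]
        _ ≤ 1 + ∑' i, out i := by
            have := hout.sum_le_tsum (Finset.range n) (fun i _ => hout0 i)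
            linarith [hm0 0, hm1 n]
    exact (summable_mul_right_iff hδ.ne').mp hsum
  have hsymm : ∀ q q', Relation.ReflTransGen G q q' → Relation.ReflTransGen G q' q := by
    intro q q' h
    induction h with
    | refl => exact Relation.ReflTransGen.refl
    | tail _ h2 ih => exact (hrev _ _ h2).trans ih
  by_contra hns
  apply hq
  let C : Set Q := {y | Relation.ReflTransGen G q y}
  have hCI : ∀ y ∈ C, ∃ a, I y a := by
    intro y hy
    rcases Relation.ReflTransGen.cases_head (hsymm _ _ hy) with h | ⟨z, ⟨a, ha, _⟩, _⟩
    · subst h; exact hexists _ hns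
    · exact ⟨a, ha⟩
  have hall : ∀ y ∈ C, ∀ a, I y a → M.Allowed C y a := fun y hy a ha z hz =>
    Relation.ReflTransGen.tail hy ⟨a, ha, hz⟩
  refine Set.mem_sUnion.mpr ⟨C, ⟨fun y hy => ?_, fun y hy z hz => ?_⟩, Relation.ReflTransGen.refl⟩
  · obtain ⟨a, ha⟩ := hCI y hy
    exact ⟨a, hall y hy a ha⟩
  · have hyz : Relation.ReflTransGen G y z := (hsymm _ _ hy).trans hz
    clear hz
    induction hyz with
    | refl => exact Relation.ReflTransGen.refl
    | tail h1 h2 ih =>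
      obtain ⟨a, ha, hδ⟩ := h2
      have hb : _ ∈ C := Relation.ReflTransGen.trans hy h1
      exact ih.tail ⟨hb, Relation.ReflTransGen.tail hb ⟨a, ha, hδ⟩, a, hall _ hb a ha, hδ⟩

theorem uniform_isStrategy [Nonempty A] : IsStrategy (uniformStrategy Q A) := by
  refine ⟨fun _ _ _ => by unfold uniformStrategy; positivity, fun _ _ => ?_⟩
  simp [uniformStrategy]

theorem uniform_succ_pos [Nonempty A] (M : MDP Q A) {d0 : Q → ℝ} (hd0 : IsDist d0) (i : ℕ)
    (q' : Q) : 0 < M.stepDist (uniformStrategy Q A) d0 (i + 1) q' ↔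
      ∃ q, 0 < M.stepDist (uniformStrategy Q A) d0 i q ∧ ∃ a, 0 < M.δ q a q' := by
  have hocc : ∀ q a, M.occ (uniformStrategy Q A) d0 i q a =
      M.stepDist (uniformStrategy Q A) d0 i q * (1 / (Fintype.card A : ℝ)) := fun q a =>
    M.occ_markov (fun _ _ _ => 1 / (Fintype.card A : ℝ)) d0 i q a
  have hc : (0 : ℝ) < 1 / (Fintype.card A : ℝ) := by positivity
  have h0 := M.stepDist_nonneg (uniform_isStrategy (Q := Q) (A := A)) hd0 i
  rw [stepDist_succ]
  have hnn : ∀ q a, 0 ≤ M.occ (uniformStrategy Q A) d0 i q a * M.δ q a q' := fun q a =>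
    mul_nonneg (M.occ_nonneg uniform_isStrategy hd0 i q a) (M.δ_nonneg _ _ _)
  rw [Finset.sum_pos_iff_of_nonneg (fun q _ => Finset.sum_nonneg fun a _ => hnn q a)]
  refine exists_congr fun q => ?_
  rw [Finset.sum_pos_iff_of_nonneg (fun a _ => hnn q a)]
  simp only [Finset.mem_univ, true_and, hocc]
  constructor
  · rintro ⟨a, h⟩
    have h1 : 0 < M.δ q a q' := by
      rcases (M.δ_nonneg q a q').eq_or_lt with h2 | h2
      · simp [← h2] at h
      · exact h2
    have h3 : 0 < M.stepDist (uniformStrategy Q A) d0 i q := by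
      rcases (h0 q).eq_or_lt with h2 | h2
      · simp [← h2] at h
      · exact h2
    exact ⟨h3, a, h1⟩
  · rintro ⟨h, a, ha⟩
    exact ⟨a, by positivity⟩

theorem uniform_pos_of_pos [Nonempty A] (M : MDP Q A) {σ : List (Q × A) → Q → A → ℝ}
    (hσ : IsStrategy σ) {d0 : Q → ℝ} (hd0 : IsDist d0) (i : ℕ) (q : Q)
    (h : 0 < M.stepDist σ d0 i q) : 0 < M.stepDist (uniformStrategy Q A) d0 i q := by
  induction i generalizing q with
  | zero => simpa [stepDist_zero] using h
  | succ i ih =>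
    rw [M.uniform_succ_pos hd0]
    rw [stepDist_succ] at h
    obtain ⟨y, _, hy⟩ := Finset.exists_lt_of_sum_lt (f := fun _ => (0 : ℝ)) (by simpa using h)
    obtain ⟨a, _, ha⟩ := Finset.exists_lt_of_sum_lt (f := fun _ => (0 : ℝ)) (by simpa using hy)
    have h1 := M.occ_nonneg hσ hd0 i y a
    have h2 := M.δ_nonneg y a q
    have h3 : 0 < M.occ σ d0 i y a := by
      rcases h1.eq_or_lt with h | h
      · simp [← h] at ha
      · exact h
    have h4 : 0 < M.δ y a q := by
      rcases h2.eq_or_lt with h | h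
      · simp [← h] at ha
      · exact h
    refine ⟨y, ih y ?_, a, h4⟩
    rw [← M.sum_occ hσ]
    exact h3.trans_le (Finset.single_le_sum (f := fun a => M.occ σ d0 i y a)
      (fun b _ => M.occ_nonneg hσ hd0 i y b) (Finset.mem_univ a))

theorem forward_dir [Nonempty A] (M : MDP Q A) {σ : List (Q × A) → Q → A → ℝ}
    (hσ : IsStrategy σ) {d0 : Q → ℝ} (hd0 : IsDist d0) (T : Set Q)
    (hlim : 0 < Filter.liminf (fun i : ℕ => mass (M.stepDist σ d0 i) T) Filter.atTop) :
    ∀ i ≥ 2 ^ Fintype.card Q,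
        0 < mass (M.stepDist (uniformStrategy Q A) d0 i) (M.ECUnion ∩ T) := by
  have hU0 := M.stepDist_nonneg (uniform_isStrategy (Q := Q) (A := A)) hd0
  have h0 := M.stepDist_nonneg hσ hd0
  obtain ⟨ε, hε, hεl⟩ := exists_between hlim
  have hev := Filter.eventually_lt_of_lt_liminf hεl
    ⟨0, by simpa using ⟨0, fun i _ => mass_nonneg (h0 i) T⟩⟩
  have htend : Filter.Tendsto (fun i => mass (M.stepDist σ d0 i) (T \ M.ECUnion))
      Filter.atTop (nhds 0) := by
    rw [show (0 : ℝ) = ∑ q : Q, 0 by simp]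
    refine tendsto_finsetSum _ fun q _ => ?_
    by_cases hq : q ∈ T \ M.ECUnion
    · simp only [hq, Set.indicator_of_mem]
      exact (M.summable_of_not_mem hσ hd0 hq.2).tendsto_atTop_zero
    · simp only [hq, not_false_eq_true, Set.indicator_of_notMem]
      exact tendsto_const_nhds
  have hev2 := htend.eventually_lt_const hε
  obtain ⟨N, hN⟩ := Filter.eventually_atTop.mp (hev.and hev2)
  have hlarge : ∀ i ≥ N, ∃ q ∈ M.ECUnion ∩ T, 0 < M.stepDist (uniformStrategy Q A) d0 i q := by
    intro i hi
    obtain ⟨h1, h2⟩ := hN i hi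
    have hsplit : mass (M.stepDist σ d0 i) T = mass (M.stepDist σ d0 i) (M.ECUnion ∩ T) +
        mass (M.stepDist σ d0 i) (T \ M.ECUnion) := by
      unfold mass
      rw [← Finset.sum_add_distrib]
      refine Finset.sum_congr rfl fun q _ => ?_
      by_cases hq : q ∈ T <;> by_cases hE : q ∈ M.ECUnion <;> simp [hq, hE]
    obtain ⟨q, hq, hpos⟩ := (mass_pos_iff (h0 i)).mp
      (show 0 < mass (M.stepDist σ d0 i) (M.ECUnion ∩ T) by linarith)
    exact ⟨q, hq, M.uniform_pos_of_pos hσ hd0 i q hpos⟩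
  obtain ⟨j, d, hd, hjd, hper⟩ := aux_per
    (fun S : Set Q => {q' | ∃ q, q ∈ S ∧ ∃ a, 0 < M.δ q a q'})
    (fun i => {q | 0 < M.stepDist (uniformStrategy Q A) d0 i q})
    (fun i => by ext q'; exact M.uniform_succ_pos hd0 i q')
  rw [Fintype.card_set] at hjd
  intro i hi
  rw [mass_pos_iff (hU0 i)]
  obtain ⟨q, hq, hpos⟩ := hlarge (i + N * d) (by nlinarith)
  refine ⟨q, hq, ?_⟩
  have := hper i (by omega) N
  have hm : q ∈ {q | 0 < M.stepDist (uniformStrategy Q A) d0 (i + N * d) q} := hpos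
  rw [this] at hm
  exact hm

/-- Maximal end-component of `q` (empty if there is none). -/
def mec (M : MDP Q A) (q : Q) : Set Q := ⋃₀ {S | M.IsEC S ∧ q ∈ S}

theorem Allowed.mono {M : MDP Q A} {S S' : Set Q} (h : S ⊆ S') {q : Q} {a : A}
    (ha : M.Allowed S q a) : M.Allowed S' q a := fun q' hq' => h (ha q' hq')

theorem ec_reach_mono {M : MDP Q A} {S S' : Set Q} (h : S ⊆ S') {x y : Q}
    (hr : Relation.ReflTransGen (M.ECEdge S) x y) : Relation.ReflTransGen (M.ECEdge S') x y :=
  Relation.ReflTransGen.mono (r := M.ECEdge S) (fun _ _ ⟨h1, h2, a, ha, hd⟩ => ⟨h h1, h h2, a, ha.mono h, hd⟩) _ _ hr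

theorem mec_isEC (M : MDP Q A) (q : Q) : M.IsEC (M.mec q) := by
  have hsub : ∀ S, M.IsEC S → q ∈ S → S ⊆ M.mec q := fun S h hq =>
    Set.subset_sUnion_of_mem ⟨h, hq⟩
  refine ⟨?_, ?_⟩
  · rintro x ⟨S, ⟨hS, hq⟩, hx⟩
    obtain ⟨a, ha⟩ := hS.1 x hx
    exact ⟨a, ha.mono (hsub S hS hq)⟩
  · rintro x ⟨S, ⟨hS, hq⟩, hx⟩ y ⟨S', ⟨hS', hq'⟩, hy⟩
    exact (ec_reach_mono (hsub S hS hq) (hS.2 x hx q hq)).trans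
      (ec_reach_mono (hsub S' hS' hq') (hS'.2 q hq' y hy))

theorem mem_mec (M : MDP Q A) {q : Q} (hq : q ∈ M.ECUnion) : q ∈ M.mec q := by
  obtain ⟨S, hS, h⟩ := hq
  exact ⟨S, ⟨hS, h⟩, h⟩

theorem mec_eq (M : MDP Q A) {q y : Q} (hy : y ∈ M.mec q) : M.mec y = M.mec q := by
  have hq : q ∈ M.mec q := by
    obtain ⟨S, ⟨hS, h⟩, _⟩ := hy
    exact ⟨S, ⟨hS, h⟩, h⟩
  apply Set.Subset.antisymm
  · have h1 : M.mec q ⊆ M.mec y := Set.subset_sUnion_of_mem ⟨M.mec_isEC q, hy⟩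
    exact Set.subset_sUnion_of_mem ⟨M.mec_isEC y, h1 hq⟩
  · exact Set.subset_sUnion_of_mem ⟨M.mec_isEC q, hy⟩

/-- Weights of the memoryless strategy that stays in the maximal end-component. -/
noncomputable def wt (M : MDP Q A) (q : Q) (a : A) : ℝ :=
  if q ∈ M.ECUnion → M.Allowed (M.mec q) q a then 1 else 0

noncomputable def tau (M : MDP Q A) (q : Q) (a : A) : ℝ := M.wt q a / ∑ b, M.wt q b

theorem wt_nonneg (M : MDP Q A) (q : Q) (a : A) : 0 ≤ M.wt q a := by
  unfold wt; split_ifs <;> norm_num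

theorem wt_sum_pos [Nonempty A] (M : MDP Q A) (q : Q) : 0 < ∑ b, M.wt q b := by
  obtain ⟨a, ha⟩ : ∃ a, q ∈ M.ECUnion → M.Allowed (M.mec q) q a := by
    by_cases hq : q ∈ M.ECUnion
    · obtain ⟨a, ha⟩ := (M.mec_isEC q).1 q (M.mem_mec hq)
      exact ⟨a, fun _ => ha⟩
    · exact ⟨Classical.arbitrary A, fun h => absurd h hq⟩
  have h1 : M.wt q a = 1 := if_pos ha
  have := Finset.single_le_sum (f := fun b => M.wt q b)
    (fun b _ => M.wt_nonneg q b) (Finset.mem_univ a)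
  simp only [h1] at this
  linarith

theorem tau_nonneg (M : MDP Q A) (q : Q) (a : A) : 0 ≤ M.tau q a :=
  div_nonneg (M.wt_nonneg q a) (Finset.sum_nonneg fun b _ => M.wt_nonneg q b)

theorem tau_sum [Nonempty A] (M : MDP Q A) (q : Q) : ∑ a, M.tau q a = 1 := by
  unfold tau
  rw [← Finset.sum_div, div_self (M.wt_sum_pos q).ne']

theorem tau_pos [Nonempty A] (M : MDP Q A) (q : Q) (a : A) :
    0 < M.tau q a ↔ (q ∈ M.ECUnion → M.Allowed (M.mec q) q a) := by
  unfold tau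
  rw [div_pos_iff_of_pos_right (M.wt_sum_pos q)]
  unfold wt
  split_ifs with h
  · simpa using h
  · simpa using h

/-- Transition matrix of the chain induced by `tau`. -/
noncomputable def ker (M : MDP Q A) : Matrix Q Q ℝ :=
  Matrix.of fun q q' => ∑ a, M.tau q a * M.δ q a q'

theorem ker_apply (M : MDP Q A) (q q' : Q) : M.ker q q' = ∑ a, M.tau q a * M.δ q a q' := rfl

theorem ker_nonneg (M : MDP Q A) (q q' : Q) : 0 ≤ M.ker q q' :=
  Finset.sum_nonneg fun a _ => mul_nonneg (M.tau_nonneg q a) (M.δ_nonneg _ _ _)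

theorem ker_pos [Nonempty A] (M : MDP Q A) (q q' : Q) : 0 < M.ker q q' ↔
    ∃ a, (q ∈ M.ECUnion → M.Allowed (M.mec q) q a) ∧ 0 < M.δ q a q' := by
  rw [ker_apply, Finset.sum_pos_iff_of_nonneg
    (fun a _ => mul_nonneg (M.tau_nonneg q a) (M.δ_nonneg _ _ _))]
  simp only [Finset.mem_univ, true_and, ← tau_pos]
  refine exists_congr fun a => ⟨fun h => ?_, fun h => mul_pos h.1 h.2⟩
  have h1 := M.tau_nonneg q a
  have h2 := M.δ_nonneg q a q'
  constructor
  · rcases h1.eq_or_lt with h3 | h3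
    · simp [← h3] at h
    · exact h3
  · rcases h2.eq_or_lt with h3 | h3
    · simp [← h3] at h
    · exact h3

theorem ker_sum [Nonempty A] (M : MDP Q A) (q : Q) : ∑ q', M.ker q q' = 1 := by
  simp only [ker_apply]
  rw [Finset.sum_comm]
  simp only [← Finset.mul_sum, M.δ_sum, mul_one, M.tau_sum]

theorem kpow_nonneg (M : MDP Q A) (k : ℕ) (q q' : Q) : 0 ≤ (M.ker ^ k) q q' := by
  induction k generalizing q' with
  | zero => rw [pow_zero, Matrix.one_apply]; split_ifs <;> norm_num
  | succ k ih =>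
    rw [pow_succ, Matrix.mul_apply]
    exact Finset.sum_nonneg fun z _ => mul_nonneg (ih z) (M.ker_nonneg _ _)

theorem kpow_sum [Nonempty A] (M : MDP Q A) (k : ℕ) (q : Q) : ∑ q', (M.ker ^ k) q q' = 1 := by
  induction k with
  | zero => simp [Matrix.one_apply]
  | succ k ih =>
    simp only [pow_succ, Matrix.mul_apply]
    rw [Finset.sum_comm]
    simp only [← Finset.mul_sum, M.ker_sum, mul_one, ih]

theorem kpow_add_ge (M : MDP Q A) (k l : ℕ) (x y z : Q) :
    (M.ker ^ k) x y * (M.ker ^ l) y z ≤ (M.ker ^ (k + l)) x z := by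
  rw [pow_add, Matrix.mul_apply]
  exact Finset.single_le_sum (f := fun y => (M.ker ^ k) x y * (M.ker ^ l) y z)
    (fun y _ => mul_nonneg (M.kpow_nonneg _ _ _) (M.kpow_nonneg _ _ _)) (Finset.mem_univ y)

theorem kpow_add_pos (M : MDP Q A) {k l : ℕ} {x y z : Q} (h1 : 0 < (M.ker ^ k) x y)
    (h2 : 0 < (M.ker ^ l) y z) : 0 < (M.ker ^ (k + l)) x z :=
  (mul_pos h1 h2).trans_le (M.kpow_add_ge k l x y z)

theorem kpow_succ_pos (M : MDP Q A) (k : ℕ) (x z : Q) : 0 < (M.ker ^ (k + 1)) x z ↔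
    ∃ y, 0 < (M.ker ^ k) x y ∧ 0 < M.ker y z := by
  rw [pow_succ, Matrix.mul_apply, Finset.sum_pos_iff_of_nonneg
    (fun y _ => mul_nonneg (M.kpow_nonneg _ _ _) (M.ker_nonneg _ _))]
  simp only [Finset.mem_univ, true_and]
  refine exists_congr fun y => ⟨fun h => ?_, fun h => mul_pos h.1 h.2⟩
  have h1 := M.kpow_nonneg k x y
  have h2 := M.ker_nonneg y z
  constructor
  · rcases h1.eq_or_lt with h3 | h3
    · simp [← h3] at h
    · exact h3
  · rcases h2.eq_or_lt with h3 | h3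
    · simp [← h3] at h
    · exact h3

theorem kpow_exists [Nonempty A] (M : MDP Q A) (k : ℕ) (x : Q) : ∃ y, 0 < (M.ker ^ k) x y := by
  by_contra! hc
  have := M.kpow_sum k x
  have h2 : ∑ q', (M.ker ^ k) x q' ≤ 0 := Finset.sum_nonpos fun y _ => hc y
  linarith

theorem mem_EC_of_mem_mec (M : MDP Q A) {x y : Q} (h : y ∈ M.mec x) : y ∈ M.ECUnion :=
  ⟨M.mec x, M.mec_isEC x, h⟩

theorem kpow_mec [Nonempty A] (M : MDP Q A) {k : ℕ} {x y : Q} (hx : x ∈ M.ECUnion)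
    (h : 0 < (M.ker ^ k) x y) : y ∈ M.mec x := by
  induction k generalizing y with
  | zero =>
    rw [pow_zero, Matrix.one_apply] at h
    split_ifs at h with hxy
    · subst hxy; exact M.mem_mec hx
    · exact absurd h (lt_irrefl _)
  | succ k ih =>
    obtain ⟨z, hz, hzy⟩ := (M.kpow_succ_pos k x y).mp h
    have hzm := ih hz
    obtain ⟨a, ha, hd⟩ := (M.ker_pos z y).mp hzy
    rw [← M.mec_eq hzm]
    exact ha (M.mem_EC_of_mem_mec hzm) y hd

theorem kpow_back [Nonempty A] (M : MDP Q A) {k : ℕ} {x y : Q} (hx : x ∈ M.ECUnion)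
    (h : 0 < (M.ker ^ k) x y) : ∃ l, 0 < (M.ker ^ l) y x := by
  have hy := M.kpow_mec hx h
  have hr := (M.mec_isEC x).2 y hy x (M.mem_mec hx)
  have key : ∀ z, Relation.ReflTransGen (M.ECEdge (M.mec x)) y z → ∃ l, 0 < (M.ker ^ l) y z := by
    intro z hz
    induction hz with
    | refl => exact ⟨0, by simp⟩
    | tail _ h2 ih =>
      obtain ⟨l, hl⟩ := ih
      obtain ⟨hb, hc, a, ha, hd⟩ := h2
      refine ⟨l + 1, (M.kpow_succ_pos _ _ _).mpr ⟨_, hl, (M.ker_pos _ _).mpr ⟨a, fun _ => ?_, hd⟩⟩⟩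
      rw [M.mec_eq hb]
      exact ha
  exact key x hr

/-- A power of the chain has support transitive and symmetric on the end-components. -/
theorem exists_period [Nonempty A] (M : MDP Q A) : ∃ p, 0 < p ∧
    (∀ k x y, 0 < (M.ker ^ (p * (k + 1))) x y → 0 < (M.ker ^ p) x y) ∧
    (∀ x ∈ M.ECUnion, ∀ y, 0 < (M.ker ^ p) x y → 0 < (M.ker ^ p) y x) := by
  obtain ⟨j, d, hd, _, hper⟩ := aux_per
    (fun S : Set (Q × Q) => {e | ∃ y, (e.1, y) ∈ S ∧ 0 < M.ker y e.2})
    (fun i => {e : Q × Q | 0 < (M.ker ^ i) e.1 e.2})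
    (fun i => by ext e; exact M.kpow_succ_pos i e.1 e.2)
  have hidem : ∀ k x y, 0 < (M.ker ^ ((j + 1) * d * (k + 1))) x y →
      0 < (M.ker ^ ((j + 1) * d)) x y := by
    intro k x y h
    have := hper ((j + 1) * d) (by nlinarith) ((j + 1) * k)
    have hm : (x, y) ∈ {e : Q × Q | 0 < (M.ker ^ ((j + 1) * d + (j + 1) * k * d)) e.1 e.2} := by
      have e : (j + 1) * d + (j + 1) * k * d = (j + 1) * d * (k + 1) := by ring
      rw [e]; exact h
    rw [this] at hm
    exact hm
  refine ⟨(j + 1) * d, by positivity, hidem, ?_⟩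
  set p := (j + 1) * d with hp
  have hp0 : 0 < p := by positivity
  intro x hx y hxy
  obtain ⟨l, hl⟩ := M.kpow_back hx hxy
  have hloop : ∀ m, 0 < (M.ker ^ (l + m * (p + l))) y x := by
    intro m
    induction m with
    | zero => simpa using hl
    | succ m ih =>
      have := M.kpow_add_pos ih (M.kpow_add_pos hxy hl)
      rwa [show l + m * (p + l) + (p + l) = l + (m + 1) * (p + l) by ring] at this
  have h1 := hloop (2 * p - 1)
  obtain ⟨t, ht⟩ : ∃ t, 2 * p = t + 1 := ⟨2 * p - 1, by omega⟩
  obtain ⟨s, hs⟩ : ∃ s, t + 2 * l = s + 1 := ⟨t + 2 * l - 1, by omega⟩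
  rw [show l + (2 * p - 1) * (p + l) = p * (s + 1) by
    rw [← hs, ht, Nat.add_sub_cancel]
    have : l + t * (p + l) = t * p + (t + 1) * l := by ring
    rw [this, ← ht]; ring] at h1
  exact hidem _ _ _ h1

theorem return_bound [Nonempty A] (M : MDP Q A) {p : ℕ}
    (hidem : ∀ k x y, 0 < (M.ker ^ (p * (k + 1))) x y → 0 < (M.ker ^ p) x y)
    (hsymm : ∀ x ∈ M.ECUnion, ∀ y, 0 < (M.ker ^ p) x y → 0 < (M.ker ^ p) y x)
    {x : Q} (hx : x ∈ M.ECUnion) : ∃ c > 0, ∀ k, c ≤ (M.ker ^ (p * (k + 1))) x x := by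
  have hxx : 0 < (M.ker ^ p) x x := by
    obtain ⟨y, hy⟩ := M.kpow_exists p x
    have := M.kpow_add_pos hy (hsymm x hx y hy)
    rw [show p + p = p * (1 + 1) by ring] at this
    exact hidem 1 x x this
  obtain ⟨c, hc, hcle⟩ : ∃ c > 0, ∀ y, 0 < (M.ker ^ p) y x → c ≤ (M.ker ^ p) y x := by
    let s := Finset.univ.filter fun y => 0 < (M.ker ^ p) y x
    obtain ⟨y, hy, hmin⟩ := s.exists_min_image (fun y => (M.ker ^ p) y x) ⟨x, by simp [s, hxx]⟩
    refine ⟨_, (Finset.mem_filter.mp hy).2, fun z hz => hmin z (by simp [s, hz])⟩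
  refine ⟨c, hc, fun k => ?_⟩
  cases k with
  | zero => simpa using hcle x hxx
  | succ k =>
    rw [show p * (k + 1 + 1) = p * (k + 1) + p by ring, pow_add, Matrix.mul_apply]
    calc c = ∑ y, (M.ker ^ (p * (k + 1))) x y * c := by
          rw [← Finset.sum_mul, M.kpow_sum, one_mul]
      _ ≤ _ := Finset.sum_le_sum fun y _ => by
          rcases (M.kpow_nonneg (p * (k + 1)) x y).eq_or_lt with h | h
          · simp [← h]
          · exact mul_le_mul_of_nonneg_left (hcle y (hsymm x hx y (hidem k x y h))) h.le

/-- The switching strategy. -/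
noncomputable def swK (M : MDP Q A) (L : ℕ) (i : ℕ) (q : Q) (a : A) : ℝ :=
  if i < L then 1 / (Fintype.card A : ℝ) else M.tau q a

theorem sw_isStrategy [Nonempty A] (M : MDP Q A) (L : ℕ) :
    IsStrategy (fun h : List (Q × A) => M.swK L h.length) := by
  refine ⟨fun h q a => ?_, fun h q => ?_⟩
  · simp only [swK]
    split_ifs
    · positivity
    · exact M.tau_nonneg q a
  · simp only [swK]
    split_ifs
    · simp
    · exact M.tau_sum q

theorem sw_early (M : MDP Q A) (d0 : Q → ℝ) (L i : ℕ) (hi : i ≤ L) (q : Q) :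
    M.stepDist (fun h : List (Q × A) => M.swK L h.length) d0 i q =
      M.stepDist (uniformStrategy Q A) d0 i q := by
  induction i generalizing q with
  | zero => simp [stepDist_zero]
  | succ i ih =>
    have hocc : ∀ q a, M.occ (uniformStrategy Q A) d0 i q a =
        M.stepDist (uniformStrategy Q A) d0 i q * (1 / (Fintype.card A : ℝ)) := fun q a =>
      M.occ_markov (fun _ _ _ => 1 / (Fintype.card A : ℝ)) d0 i q a
    rw [stepDist_succ, stepDist_succ]
    refine Finset.sum_congr rfl fun y _ => Finset.sum_congr rfl fun a _ => ?_
    rw [M.occ_markov (M.swK L), hocc, ih (by omega)]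
    simp only [swK]
    rw [if_pos (by omega)]

theorem sw_late (M : MDP Q A) (d0 : Q → ℝ) (L m : ℕ) (q : Q) :
    M.stepDist (fun h : List (Q × A) => M.swK L h.length) d0 (L + m) q =
      ∑ y, M.stepDist (uniformStrategy Q A) d0 L y * (M.ker ^ m) y q := by
  induction m generalizing q with
  | zero => simp [Matrix.one_apply, sw_early]
  | succ m ih =>
    rw [← add_assoc, stepDist_succ]
    simp only [M.occ_markov (M.swK L), ih, pow_succ, Matrix.mul_apply, Finset.mul_sum]
    have : ∀ z a, M.swK L (L + m) z a = M.tau z a := fun z a => by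
      unfold swK; rw [if_neg (by omega)]
    simp only [this]
    conv_rhs => rw [Finset.sum_comm]
    refine Finset.sum_congr rfl fun z _ => ?_
    simp only [ker_apply, Finset.mul_sum, Finset.sum_mul]
    rw [Finset.sum_comm]
    refine Finset.sum_congr rfl fun y _ => Finset.sum_congr rfl fun a _ => ?_
    ring

theorem uniform_kpow [Nonempty A] (M : MDP Q A) {d0 : Q → ℝ} (hd0 : IsDist d0) {i k : ℕ} {x y : Q}
    (hx : 0 < M.stepDist (uniformStrategy Q A) d0 i x) (h : 0 < (M.ker ^ k) x y) :
    0 < M.stepDist (uniformStrategy Q A) d0 (i + k) y := by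
  induction k generalizing y with
  | zero =>
    rw [pow_zero, Matrix.one_apply] at h
    split_ifs at h with hxy
    · subst hxy; exact hx
    · exact absurd h (lt_irrefl _)
  | succ k ih =>
    obtain ⟨z, hz, hzy⟩ := (M.kpow_succ_pos k x y).mp h
    obtain ⟨a, _, hd⟩ := (M.ker_pos z y).mp hzy
    exact (M.uniform_succ_pos hd0 _ _).mpr ⟨z, ih hz, a, hd⟩

theorem backward_dir [Nonempty A] (M : MDP Q A) {d0 : Q → ℝ} (hd0 : IsDist d0) (T : Set Q) (N : ℕ)
    (hN : ∀ i ≥ N, 0 < mass (M.stepDist (uniformStrategy Q A) d0 i) (M.ECUnion ∩ T)) :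
    ∃ σ, IsStrategy σ ∧
        0 < Filter.liminf (fun i : ℕ => mass (M.stepDist σ d0 i) T) Filter.atTop := by
  obtain ⟨p, hp, hidem, hsymm⟩ := M.exists_period
  have hU0 := M.stepDist_nonneg (uniform_isStrategy (Q := Q) (A := A)) hd0
  have hσ := M.sw_isStrategy (N + p)
  refine ⟨_, hσ, ?_⟩
  have h0 := M.stepDist_nonneg hσ hd0
  set f : ℕ → ℝ := fun i => mass (M.stepDist (fun h => M.swK (N + p) h.length) d0 i) T with hf
  have hres : ∀ r : Fin p, ∃ c > 0, ∀ k, c ≤ f (N + p + (r + p + p * (k + 1))) := by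
    intro r
    obtain ⟨x, ⟨hxE, hxT⟩, hx⟩ := (mass_pos_iff (hU0 _)).mp (hN (N + r) (by omega))
    obtain ⟨y, hy⟩ := M.kpow_exists (p - r) x
    obtain ⟨z, hz⟩ := M.kpow_exists r y
    have hxz := M.kpow_add_pos hy hz
    rw [show p - (r : ℕ) + r = p by omega] at hxz
    have hyx := M.kpow_add_pos hz (hsymm x hxE z hxz)
    have hyU := M.uniform_kpow hd0 hx hy
    rw [show N + (r : ℕ) + (p - r) = N + p by omega] at hyU
    obtain ⟨c, hc, hcle⟩ := M.return_bound hidem hsymm hxE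
    refine ⟨_, mul_pos hyU (mul_pos hyx hc), fun k => ?_⟩
    refine le_trans ?_ (le_mass (h0 _) hxT)
    rw [sw_late]
    refine le_trans ?_ (Finset.single_le_sum
      (f := fun y => M.stepDist (uniformStrategy Q A) d0 (N + p) y *
        (M.ker ^ (r + p + p * (k + 1))) y x)
      (fun y _ => mul_nonneg (hU0 _ _) (M.kpow_nonneg _ _ _)) (Finset.mem_univ y))
    refine mul_le_mul_of_nonneg_left ?_ hyU.le
    exact (mul_le_mul_of_nonneg_left (hcle k) hyx.le).trans (M.kpow_add_ge _ _ _ _ _)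
  choose c hc hcle using hres
  have : Nonempty (Fin p) := ⟨⟨0, hp⟩⟩
  obtain ⟨r0, hr0⟩ := Finite.exists_min c
  refine (hc r0).trans_le (Filter.le_liminf_of_le ?_ ?_)
  · refine Filter.IsBoundedUnder.isCoboundedUnder_ge ⟨1, ?_⟩
    simp only [Filter.eventually_map]
    exact Filter.Eventually.of_forall fun i =>
      (mass_le (h0 i) T).trans (M.stepDist_sum hσ hd0 i).le
  · filter_upwards [Filter.eventually_ge_atTop (N + 3 * p)] with i hi
    have h1 := Nat.mod_add_div (i - (N + 3 * p)) p
    have h2 := hcle ⟨(i - (N + 3 * p)) % p, Nat.mod_lt _ hp⟩ ((i - (N + 3 * p)) / p)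
    refine (hr0 _).trans (h2.trans_eq ?_)
    congr 1
    simp only [mul_add, mul_one]
    omega

end MDP

open MDP in
/-- `d0` is boundedly strongly synchronizing in `T` (some strategy has
`liminf_i M^σ_i(T) > 0`) iff `M^{σ_u}_i(E ∩ T) > 0` for all `i ≥ 2^n`. -/
theorem stmt13 {Q A : Type} [Fintype Q] [Fintype A] [Nonempty A] (M : MDP Q A)
    (d0 : Q → ℝ) (hd0 : IsDist d0) (T : Set Q) :
    (∃ σ, IsStrategy σ ∧
        0 < Filter.liminf (fun i : ℕ => mass (M.stepDist σ d0 i) T) Filter.atTop) ↔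
      ∀ i ≥ 2 ^ Fintype.card Q,
        0 < mass (M.stepDist (uniformStrategy Q A) d0 i) (M.ECUnion ∩ T) := by
  constructor
  · rintro ⟨σ, hσ, h⟩
    exact M.forward_dir hσ hd0 T h
  · intro h
    exact M.backward_dir hd0 T _ h
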